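/- arXiv:1702.08373 — 4 statements merged into one kernel-verified Lean document; each statement's English description precedes it below -/
import Mathlib

section
/- Let S and S' be probability measures on the same finite set Ω, and let G be a graph with vertex set W ⊆ Ω such that Pr_S(v) > 0 and Pr_{S'}(v) > 0 for all v ∈ W. Suppose 0 < ε₀ < 1/2 and δ > 0 are such that min{Pr_S(W), Pr_{S'}(W)} > 1 − ε₀, that G has diameter at most r < ∞, and that for every edge uv of G one has |log[ (Pr_{S'}(u)/Pr_{S'}(v)) / (Pr_S(u)/Pr_S(v)) ]| ≤ δ. Then for every v ∈ W, |log( Pr_{S'}(v) / Pr_S(v) )| ≤ rδ + 2ε₀. -/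
open Finset

/-!
Let `L = log (S' / S)`. The edge condition says that `L` changes by at most `δ` along every edge,
so `L` varies by at most `r * δ` over `W`. Averaging then pins down its value: if `L ≤ b`
on `W`, then `S' W ≤ exp b * S W ≤ exp b`, hence `log (1 - ε₀) ≤ b`. Applied with
`b = L v + r * δ`, and again with `S` and `S'` exchanged, this bounds `L v` on both sides.
-/

lemma dist_le_length_mul_of_adj {V X : Type*} [PseudoMetricSpace X] {G : SimpleGraph V}
    {f : V → X} {δ : ℝ} (hf : ∀ u v, G.Adj u v → dist (f u) (f v) ≤ δ) {u v : V}
    (p : G.Walk u v) : dist (f u) (f v) ≤ p.length * δ := by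
  induction p with
  | nil => simp
  | @cons u w v huw p ih =>
    calc dist (f u) (f v) ≤ dist (f u) (f w) + dist (f w) (f v) := dist_triangle _ _ _
      _ ≤ δ + p.length * δ := add_le_add (hf u w huw) ih
      _ = (p.cons huw).length * δ := by
        rw [SimpleGraph.Walk.length_cons]
        push_cast
        ring

lemma log_div_div_div_eq_sub {a b c d : ℝ} (ha : a ≠ 0) (hb : b ≠ 0) (hc : c ≠ 0) (hd : d ≠ 0) :
    Real.log ((a / b) / (c / d)) = Real.log (a / c) - Real.log (b / d) := by
  rw [div_div_div_comm, Real.log_div (div_ne_zero ha hc) (div_ne_zero hb hd)]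

lemma tsum_le_exp_mul_tsum_of_log_div_le {ι : Type*} {f g : ι → ℝ} {b : ℝ}
    (hf : ∀ i, 0 < f i) (hg : ∀ i, 0 < g i) (hf_sum : Summable f)
    (hb : ∀ i, Real.log (g i / f i) ≤ b) : ∑' i, g i ≤ Real.exp b * ∑' i, f i := by
  have hle : ∀ i, g i ≤ Real.exp b * f i := fun i =>
    (div_le_iff₀ (hf i)).1 ((Real.log_le_iff_le_exp (div_pos (hg i) (hf i))).1 (hb i))
  have hexp_sum : Summable fun i => Real.exp b * f i := hf_sum.mul_left _
  have hg_sum : Summable g := hexp_sum.of_nonneg_of_le (fun i => (hg i).le) hle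
  calc ∑' i, g i ≤ ∑' i, Real.exp b * f i := hg_sum.tsum_le_tsum hle hexp_sum
    _ = Real.exp b * ∑' i, f i := tsum_mul_left

lemma log_le_of_le_tsum_of_log_div_le {Ω : Type*} {S S' : Ω → ℝ} {W : Set Ω} {m b : ℝ}
    (hS0 : ∀ v, 0 ≤ S v) (hS1 : HasSum S 1) (hpos : ∀ v ∈ W, 0 < S v ∧ 0 < S' v)
    (hm : 0 < m) (hmW : m ≤ ∑' v : W, S' v) (hb : ∀ v ∈ W, Real.log (S' v / S v) ≤ b) :
    Real.log m ≤ b := by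
  have hSW : ∑' v : W, S v ≤ 1 :=
    (hS1.summable.tsum_subtype_le S W hS0).trans_eq hS1.tsum_eq
  rw [Real.log_le_iff_le_exp hm]
  calc m ≤ ∑' v : W, S' v := hmW
    _ ≤ Real.exp b * ∑' v : W, S v :=
      tsum_le_exp_mul_tsum_of_log_div_le (fun v => (hpos v v.2).1) (fun v => (hpos v v.2).2)
        (hS1.summable.subtype W) fun v => hb v v.2
    _ ≤ Real.exp b := mul_le_of_le_one_right (Real.exp_pos b).le hSW

lemma neg_log_one_sub_le_two_mul {x : ℝ} (hx0 : 0 ≤ x) (hx : x ≤ 1 / 2) :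
    -Real.log (1 - x) ≤ 2 * x := by
  have hpos : 0 < 1 - x := by linarith
  have hlog : 1 - (1 - x)⁻¹ ≤ Real.log (1 - x) := Real.one_sub_inv_le_log_of_pos hpos
  have hinv : (1 - x)⁻¹ ≤ 1 + 2 * x := by
    rw [inv_le_iff_one_le_mul₀ hpos]
    nlinarith
  linarith

theorem ratio_transfer_general {Ω : Type*} {S S' : Ω → ℝ}
    (hS0 : ∀ v, 0 ≤ S v) (hS'0 : ∀ v, 0 ≤ S' v) (hS1 : HasSum S 1) (hS'1 : HasSum S' 1)
    {W : Set Ω} {G : SimpleGraph Ω} (hGW : ∀ u v, G.Adj u v → u ∈ W ∧ v ∈ W)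
    (hpos : ∀ v ∈ W, 0 < S v ∧ 0 < S' v) {ε₀ δ : ℝ} (hε₀ : ε₀ < 1) (hδ : 0 ≤ δ)
    (hW : 1 - ε₀ ≤ min (∑' v : W, S v) (∑' v : W, S' v)) {r : ℕ}
    (hdiam : ∀ u ∈ W, ∀ v ∈ W, ∃ p : G.Walk u v, p.length ≤ r)
    (hedge : ∀ u v, G.Adj u v → |Real.log ((S' u / S' v) / (S u / S v))| ≤ δ) :
    ∀ v ∈ W, |Real.log (S' v / S v)| ≤ r * δ - Real.log (1 - ε₀) := by
  intro v hv
  obtain ⟨hSW, hS'W⟩ := le_min_iff.1 hW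
  have hedge_dist : ∀ u w, G.Adj u w →
      dist (Real.log (S' u / S u)) (Real.log (S' w / S w)) ≤ δ := by
    intro u w huw
    obtain ⟨hu, hu'⟩ := hpos u (hGW u w huw).1
    obtain ⟨hw, hw'⟩ := hpos w (hGW u w huw).2
    rw [Real.dist_eq, ← log_div_div_div_eq_sub hu'.ne' hw'.ne' hu.ne' hw.ne']
    exact hedge u w huw
  have hosc : ∀ u ∈ W, |Real.log (S' u / S u) - Real.log (S' v / S v)| ≤ r * δ := by
    intro u hu
    obtain ⟨p, hp⟩ := hdiam u hu v hv
    calc _ ≤ p.length * δ := dist_le_length_mul_of_adj hedge_dist p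
      _ ≤ r * δ := by gcongr
  have hlower : Real.log (1 - ε₀) ≤ Real.log (S' v / S v) + r * δ :=
    log_le_of_le_tsum_of_log_div_le hS0 hS1 hpos (sub_pos.2 hε₀) hS'W fun u hu => by
      linarith [(abs_le.1 (hosc u hu)).2]
  have hupper : Real.log (1 - ε₀) ≤ -Real.log (S' v / S v) + r * δ :=
    log_le_of_le_tsum_of_log_div_le hS'0 hS'1 (fun u hu => (hpos u hu).symm) (sub_pos.2 hε₀) hSW
      fun u hu => by
        rw [← inv_div, Real.log_inv]
        linarith [(abs_le.1 (hosc u hu)).1]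
  exact abs_le.2 ⟨by linarith, by linarith⟩

/-- Ratios of probabilities propagate along paths of a graph of outcomes
(Lemma 2.1 of the paper, explicit-constant form). -/
theorem ratio_transfer {Ω : Type*} [Fintype Ω] [DecidableEq Ω]
    (S S' : Ω → ℝ) (hS0 : ∀ v, 0 ≤ S v) (hS'0 : ∀ v, 0 ≤ S' v)
    (hS1 : ∑ v, S v = 1) (hS'1 : ∑ v, S' v = 1)
    (W : Finset Ω) (G : SimpleGraph Ω)
    (hGW : ∀ u v : Ω, G.Adj u v → u ∈ W ∧ v ∈ W)
    (hpos : ∀ v ∈ W, 0 < S v ∧ 0 < S' v)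
    (ε₀ δ : ℝ) (hε₀ : 0 < ε₀) (hε₀' : ε₀ < 1 / 2) (hδ : 0 < δ)
    (hW : 1 - ε₀ < min (∑ v ∈ W, S v) (∑ v ∈ W, S' v))
    (r : ℕ)
    (hdiam : ∀ u ∈ W, ∀ v ∈ W, ∃ p : G.Walk u v, p.length ≤ r)
    (hedge : ∀ u v : Ω, G.Adj u v →
      |Real.log ((S' u / S' v) / (S u / S v))| ≤ δ) :
    ∀ v ∈ W, |Real.log (S' v / S v)| ≤ r * δ + 2 * ε₀ := by
  intro v hv
  have hbound := ratio_transfer_general (W := W) (ε₀ := ε₀) hS0 hS'0 (hS1 ▸ hasSum_fintype S)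
    (hS'1 ▸ hasSum_fintype S') hGW hpos (by linarith) hδ.le
    (by simpa only [Finset.tsum_subtype'] using hW.le) hdiam hedge v hv
  linarith [neg_log_one_sub_le_two_mul hε₀.le hε₀'.le]
end

section
/- Let d = (d_1,…,d_n) be a graphical sequence with Σ_i d_i = dn and Δ = max_i d_i, and suppose dn > Δ(Δ+2). Then for all distinct a, v ∈ [n], the probability P_{av}(d) that av is an edge of a uniformly random simple graph on [n] with degree sequence d satisfies P_{av}(d) ≤ Δ² / ( dn · (1 − Δ(Δ+2)/(dn)) ). -/
open Finset

noncomputable section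

/-- Simple graphs on vertex set `[n]`, encoded as finsets of non-diagonal unordered pairs. -/
def Graphs (n : ℕ) : Finset (Finset (Sym2 (Fin n))) :=
  Finset.univ.filter (fun E => ∀ e ∈ E, ¬ e.IsDiag)

/-- Degree of vertex `i` in the graph `E`. -/
def deg {n : ℕ} (E : Finset (Sym2 (Fin n))) (i : Fin n) : ℕ :=
  (E.filter (fun e => i ∈ e)).card

/-- Number of simple graphs on `[n]` with degree sequence `D`. -/
def gcount (n : ℕ) (D : Fin n → ℕ) : ℕ :=
  ((Graphs n).filter (fun E => ∀ i, deg E i = D i)).card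

/-- Probability that the edge `av` is present in a uniformly random simple graph on `[n]`
with degree sequence `D`. -/
def Pedge (n : ℕ) (D : Fin n → ℕ) (a v : Fin n) : ℝ :=
  (((Graphs n).filter (fun E => s(a, v) ∈ E ∧ ∀ i, deg E i = D i)).card : ℝ) /
    (gcount n D : ℝ)

/-!
Count pairs consisting of a graph `E` containing `av` and a switching of `E` that replaces two
edges `av`, `xy` by `ax`, `vy`. Among the `dn` ordered pairs `(x, y)` with `xy ∈ E`, only those
with `x` in the closed neighbourhood of `a` or `y` in that of `v` are excluded, which is at most
`2Δ(Δ + 1)` of them. Conversely, a graph `F` avoiding `av` arises from at most `Δ²` switchings,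
since `x` is a neighbour of `a` and `y` a neighbour of `v` in `F`, and `(x, y)` and `F` determine
`E`. Hence `A (dn - 2Δ(Δ + 1)) ≤ B Δ²`, where `A` and `B` count the graphs with and without `av`;
adding `A Δ²` to both sides gives the bound on `A / (A + B)`.
-/

section Switching

variable {V : Type*}

/-- The pair of edges `av`, `xy` of the edge set `E` can be replaced by `ax`, `vy`: these are
non-loops and not yet in `E`. The order of the endpoints matters, as the other way of re-pairing
them is `ay`, `vx`. -/
structure Switchable (E : Finset (Sym2 V)) (a v x y : V) : Prop where
  mem_left : s(a, v) ∈ E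
  mem_right : s(x, y) ∈ E
  notMem_left : s(a, x) ∉ E
  notMem_right : s(v, y) ∉ E
  ne_left : a ≠ x
  ne_right : v ≠ y

instance (E : Finset (Sym2 V)) (a v x y : V) : Decidable (Switchable E a v x y) :=
  Classical.dec _

/-- The pairs `(x, y)` for which the edges `av`, `xy` of `E` can be switched to `ax`, `vy`. -/
def switchings [Fintype V] (E : Finset (Sym2 V)) (a v : V) : Finset (V × V) :=
  {p | Switchable E a v p.1 p.2}

variable [DecidableEq V]

/-- The switching operation on edge sets: replace the edges `av`, `xy` by `ax`, `vy`. It is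
meaningful when `Switchable E a v x y` holds. -/
def edgeSwitch (E : Finset (Sym2 V)) (a v x y : V) : Finset (Sym2 V) :=
  E \ {s(a, v), s(x, y)} ∪ {s(a, x), s(v, y)}

/-- The set of neighbours of `i` in the graph with edge set `E`. -/
def neighbors [Fintype V] (E : Finset (Sym2 V)) (i : V) : Finset V :=
  {x | s(i, x) ∈ E}

/-- The ordered pairs of endpoints of edges in `E`; each non-loop edge occurs in both directions. -/
def darts [Fintype V] (E : Finset (Sym2 V)) : Finset (V × V) :=
  {p | s(p.1, p.2) ∈ E}

lemma mem_edgeSwitch {E : Finset (Sym2 V)} {a v x y : V} {e : Sym2 V} :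
    e ∈ edgeSwitch E a v x y ↔
      (e ∈ E ∧ e ≠ s(a, v) ∧ e ≠ s(x, y)) ∨ e = s(a, x) ∨ e = s(v, y) := by
  simp only [edgeSwitch, mem_union, mem_sdiff, mem_insert, mem_singleton, not_or]

namespace Switchable

variable {E : Finset (Sym2 V)} {a v x y : V}

lemma notMem_edgeSwitch (h : Switchable E a v x y) : s(a, v) ∉ edgeSwitch E a v x y := by
  have ne_new_left : s(a, v) ≠ s(a, x) := ne_of_mem_of_not_mem h.mem_left h.notMem_left
  have ne_new_right : s(a, v) ≠ s(v, y) := ne_of_mem_of_not_mem h.mem_left h.notMem_right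
  simp [edgeSwitch, ne_new_left, ne_new_right]

lemma pair_subset (h : Switchable E a v x y) : {s(a, v), s(x, y)} ⊆ E := by
  simp [insert_subset_iff, h.mem_left, h.mem_right]

lemma disjoint_sdiff_pair (h : Switchable E a v x y) :
    Disjoint (E \ {s(a, v), s(x, y)}) {s(a, x), s(v, y)} := by
  simp [h.notMem_left, h.notMem_right]

lemma edgeSwitch_edgeSwitch (h : Switchable E a v x y) :
    edgeSwitch (edgeSwitch E a v x y) a x v y = E := by
  rw [edgeSwitch, edgeSwitch, union_sdiff_cancel_right h.disjoint_sdiff_pair,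
    sdiff_union_of_subset h.pair_subset]

end Switchable

lemma injOn_edgeSwitch (a v x y : V) :
    Set.InjOn (fun E => edgeSwitch E a v x y) {E | Switchable E a v x y} :=
  Set.LeftInvOn.injOn (f₁' := fun E => edgeSwitch E a x v y)
    fun _ h => h.edgeSwitch_edgeSwitch

end Switching

section Degree

variable {n : ℕ} {E : Finset (Sym2 (Fin n))} {a v x y : Fin n}

lemma card_neighbors (E : Finset (Sym2 (Fin n))) (i : Fin n) : #(neighbors E i) = deg E i := by
  have image_eq : (neighbors E i).image (s(i, ·)) = {e ∈ E | i ∈ e} := by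
    ext e
    simp only [neighbors, mem_image, mem_filter, mem_univ, true_and]
    constructor
    · rintro ⟨x, hx, rfl⟩
      exact ⟨hx, Sym2.mem_mk_left i x⟩
    · rintro ⟨he, x, rfl⟩
      exact ⟨x, he, rfl⟩
  rw [deg, ← image_eq, card_image_of_injective _ fun _ _ => Sym2.congr_right.1]

lemma ne_of_mem_of_mem_Graphs (hE : E ∈ Graphs n) (h : s(x, y) ∈ E) : x ≠ y :=
  (mem_filter.1 hE).2 _ h

lemma deg_union_of_disjoint {F : Finset (Sym2 (Fin n))} (h : Disjoint E F) (i : Fin n) :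
    deg (E ∪ F) i = deg E i + deg F i := by
  rw [deg, filter_union, card_union_of_disjoint (disjoint_filter_filter h)]
  rfl

lemma deg_pair (hav : a ≠ v) (hxy : x ≠ y) (hne : s(a, v) ≠ s(x, y)) (i : Fin n) :
    deg {s(a, v), s(x, y)} i =
      (if i = a then 1 else 0) + (if i = v then 1 else 0) +
        ((if i = x then 1 else 0) + (if i = y then 1 else 0)) := by
  have ite_mem {p q : Fin n} (hpq : p ≠ q) :
      (if i ∈ s(p, q) then 1 else 0) = (if i = p then 1 else 0) + (if i = q then 1 else 0) := by
    grind
  rw [deg, card_filter, sum_pair hne, ite_mem hav, ite_mem hxy]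

lemma Switchable.deg_edgeSwitch (h : Switchable E a v x y) (hE : E ∈ Graphs n) (i : Fin n) :
    deg (edgeSwitch E a v x y) i = deg E i := by
  have hav : a ≠ v := ne_of_mem_of_mem_Graphs hE h.mem_left
  have hxy : x ≠ y := ne_of_mem_of_mem_Graphs hE h.mem_right
  have hxv : x ≠ v := by
    rintro rfl
    exact h.notMem_left h.mem_left
  have old_ne : s(a, v) ≠ s(x, y) := by simp [h.ne_left, hxv.symm]
  have new_ne : s(a, x) ≠ s(v, y) := by simp [hav, hxv]
  calc deg (edgeSwitch E a v x y) i
      = deg (E \ {s(a, v), s(x, y)}) i + deg {s(a, x), s(v, y)} i :=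
        deg_union_of_disjoint h.disjoint_sdiff_pair i
    _ = deg (E \ {s(a, v), s(x, y)}) i + deg {s(a, v), s(x, y)} i := by
        rw [deg_pair hav hxy old_ne, deg_pair h.ne_left h.ne_right new_ne]
        ring
    _ = deg E i := by
        rw [← deg_union_of_disjoint sdiff_disjoint, sdiff_union_of_subset h.pair_subset]

lemma Switchable.edgeSwitch_mem_Graphs (h : Switchable E a v x y) (hE : E ∈ Graphs n) :
    edgeSwitch E a v x y ∈ Graphs n := by
  refine mem_filter.2 ⟨mem_univ _, fun e he => ?_⟩
  rcases mem_edgeSwitch.1 he with ⟨he, -⟩ | rfl | rfl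
  · exact (mem_filter.1 hE).2 e he
  · exact h.ne_left
  · exact h.ne_right

end Degree

section LowerBound

variable {n : ℕ} {E : Finset (Sym2 (Fin n))} {K : ℕ}

lemma card_darts_fst_mem (E : Finset (Sym2 (Fin n))) (X : Finset (Fin n)) :
    #{p ∈ darts E | p.1 ∈ X} = ∑ x ∈ X, deg E x := by
  simp only [darts, filter_filter, and_comm, ← card_neighbors, neighbors, card_filter,
    Fintype.sum_prod_type, ite_and, sum_ite_irrel, sum_const_zero, sum_ite_mem, univ_inter]

lemma card_darts_snd_mem (E : Finset (Sym2 (Fin n))) (Y : Finset (Fin n)) :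
    #{p ∈ darts E | p.2 ∈ Y} = ∑ y ∈ Y, deg E y := by
  rw [← card_darts_fst_mem]
  refine card_equiv (Equiv.prodComm _ _) fun p => ?_
  simp [darts, Sym2.eq_swap]

lemma card_darts (E : Finset (Sym2 (Fin n))) : #(darts E) = ∑ i, deg E i := by
  simpa using card_darts_fst_mem E univ

lemma sum_deg_insert_neighbors_le (hK : ∀ i, deg E i ≤ K) (i : Fin n) :
    ∑ x ∈ insert i (neighbors E i), deg E x ≤ (K + 1) * K :=
  calc ∑ x ∈ insert i (neighbors E i), deg E x
      ≤ #(insert i (neighbors E i)) * K := sum_le_card_nsmul _ _ _ fun x _ => hK x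
    _ ≤ (K + 1) * K := by
        gcongr
        calc #(insert i (neighbors E i)) ≤ #(neighbors E i) + 1 := card_insert_le _ _
          _ ≤ K + 1 := by
            rw [card_neighbors]
            gcongr
            exact hK i

lemma sum_deg_le_card_switchings_add {a v : Fin n} (hav : s(a, v) ∈ E) (hK : ∀ i, deg E i ≤ K) :
    ∑ i, deg E i ≤ #(switchings E a v) + 2 * ((K + 1) * K) := by
  let nearA := insert a (neighbors E a)
  let nearV := insert v (neighbors E v)
  have cover : darts E ⊆
      switchings E a v ∪ ({p ∈ darts E | p.1 ∈ nearA} ∪ {p ∈ darts E | p.2 ∈ nearV}) := by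
    rintro ⟨x, y⟩ hxy
    by_cases hx : x ∈ nearA
    · exact mem_union_right _ <| mem_union_left _ <| mem_filter.2 ⟨hxy, hx⟩
    by_cases hy : y ∈ nearV
    · exact mem_union_right _ <| mem_union_right _ <| mem_filter.2 ⟨hxy, hy⟩
    simp only [nearA, nearV, neighbors, mem_insert, mem_filter, mem_univ, true_and,
      not_or] at hx hy
    exact mem_union_left _ <| mem_filter.2
      ⟨mem_univ _, hav, (mem_filter.1 hxy).2, hx.2, hy.2, Ne.symm hx.1, Ne.symm hy.1⟩
  calc ∑ i, deg E i = #(darts E) := (card_darts E).symm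
    _ ≤ #(switchings E a v) + (#{p ∈ darts E | p.1 ∈ nearA} + #{p ∈ darts E | p.2 ∈ nearV}) :=
        (card_le_card cover).trans <| (card_union_le _ _).trans <|
          Nat.add_le_add_left (card_union_le _ _) _
    _ = #(switchings E a v) + (∑ x ∈ nearA, deg E x + ∑ y ∈ nearV, deg E y) := by
        rw [card_darts_fst_mem, card_darts_snd_mem]
    _ ≤ #(switchings E a v) + ((K + 1) * K + (K + 1) * K) := by
        gcongr <;> exact sum_deg_insert_neighbors_le hK _
    _ = #(switchings E a v) + 2 * ((K + 1) * K) := by ring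

end LowerBound

section DoubleCounting

variable {n : ℕ} {D : Fin n → ℕ} {E : Finset (Sym2 (Fin n))}

/-- The edge sets of the simple graphs on `[n]` with degree sequence `D`. -/
def realizations (D : Fin n → ℕ) : Finset (Finset (Sym2 (Fin n))) :=
  {E ∈ Graphs n | ∀ i, deg E i = D i}

lemma mem_realizations : E ∈ realizations D ↔ E ∈ Graphs n ∧ ∀ i, deg E i = D i :=
  mem_filter

lemma Pedge_eq_card_div_card (D : Fin n → ℕ) (a v : Fin n) :
    Pedge n D a v = #{E ∈ realizations D | s(a, v) ∈ E} / #(realizations D) := by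
  simp only [Pedge, gcount, realizations, filter_filter, and_comm]

lemma Switchable.edgeSwitch_mem_realizations {a v x y : Fin n} (h : Switchable E a v x y)
    (hE : E ∈ realizations D) : edgeSwitch E a v x y ∈ realizations D := by
  obtain ⟨hE, hD⟩ := mem_realizations.1 hE
  exact mem_realizations.2
    ⟨h.edgeSwitch_mem_Graphs hE, fun i => (h.deg_edgeSwitch hE i).trans (hD i)⟩

lemma card_realizations_switchable_le (D : Fin n → ℕ) (a v x y : Fin n) :
    #{E ∈ realizations D | Switchable E a v x y} ≤
      #{E ∈ {E ∈ realizations D | s(a, v) ∉ E} | (x, y) ∈ neighbors E a ×ˢ neighbors E v} := by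
  refine card_le_card_of_injOn (fun E => edgeSwitch E a v x y) (fun E hE => ?_)
    ((injOn_edgeSwitch a v x y).mono fun E hE => (mem_filter.1 hE).2)
  obtain ⟨hE, h⟩ := mem_filter.1 hE
  simp [h.edgeSwitch_mem_realizations hE, h.notMem_edgeSwitch, neighbors, mem_edgeSwitch]

lemma sum_card_switchings_le (D : Fin n → ℕ) (a v : Fin n) :
    ∑ E ∈ realizations D, #(switchings E a v) ≤
      #{E ∈ realizations D | s(a, v) ∉ E} * (D a * D v) :=
  calc ∑ E ∈ realizations D, #(switchings E a v)
      = ∑ p : Fin n × Fin n, #{E ∈ realizations D | Switchable E a v p.1 p.2} :=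
        sum_card_bipartiteAbove_eq_sum_card_bipartiteBelow
          fun E (p : Fin n × Fin n) => Switchable E a v p.1 p.2
    _ ≤ ∑ p : Fin n × Fin n, #{E ∈ {E ∈ realizations D | s(a, v) ∉ E} |
          p ∈ neighbors E a ×ˢ neighbors E v} :=
        sum_le_sum fun p _ => card_realizations_switchable_le D a v p.1 p.2
    _ = ∑ E ∈ realizations D with s(a, v) ∉ E,
          #{p : Fin n × Fin n | p ∈ neighbors E a ×ˢ neighbors E v} :=
        (sum_card_bipartiteAbove_eq_sum_card_bipartiteBelow
          fun E p => p ∈ neighbors E a ×ˢ neighbors E v).symm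
    _ = ∑ E ∈ realizations D with s(a, v) ∉ E, D a * D v := by
        refine sum_congr rfl fun E hE => ?_
        have hD := (mem_realizations.1 (mem_filter.1 hE).1).2
        rw [filter_univ_mem, card_product, card_neighbors, card_neighbors, hD, hD]
    _ = #{E ∈ realizations D | s(a, v) ∉ E} * (D a * D v) := sum_const_nat fun _ _ => rfl

lemma card_mem_mul_sum_le_card_notMem_mul {K : ℕ} (hK : ∀ i, D i ≤ K) (a v : Fin n) :
    #{E ∈ realizations D | s(a, v) ∈ E} * ∑ i, D i ≤
      #{E ∈ realizations D | s(a, v) ∉ E} * K ^ 2 +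
        #{E ∈ realizations D | s(a, v) ∈ E} * (2 * ((K + 1) * K)) :=
  calc #{E ∈ realizations D | s(a, v) ∈ E} * ∑ i, D i
      = ∑ E ∈ realizations D with s(a, v) ∈ E, ∑ i, D i := (sum_const_nat fun _ _ => rfl).symm
    _ ≤ ∑ E ∈ realizations D with s(a, v) ∈ E,
          (#(switchings E a v) + 2 * ((K + 1) * K)) := by
        refine sum_le_sum fun E hE => ?_
        obtain ⟨hE, hav⟩ := mem_filter.1 hE
        obtain ⟨-, hD⟩ := mem_realizations.1 hE
        simpa only [hD] using sum_deg_le_card_switchings_add hav fun i => (hD i).trans_le (hK i)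
    _ = ∑ E ∈ realizations D with s(a, v) ∈ E, #(switchings E a v) +
          #{E ∈ realizations D | s(a, v) ∈ E} * (2 * ((K + 1) * K)) := by
        rw [sum_add_distrib, sum_const, smul_eq_mul]
    _ ≤ ∑ E ∈ realizations D, #(switchings E a v) +
          #{E ∈ realizations D | s(a, v) ∈ E} * (2 * ((K + 1) * K)) := by
        gcongr
        exact filter_subset _ _
    _ ≤ #{E ∈ realizations D | s(a, v) ∉ E} * (D a * D v) +
          #{E ∈ realizations D | s(a, v) ∈ E} * (2 * ((K + 1) * K)) := by
        gcongr
        exact sum_card_switchings_le D a v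
    _ ≤ #{E ∈ realizations D | s(a, v) ∉ E} * K ^ 2 +
          #{E ∈ realizations D | s(a, v) ∈ E} * (2 * ((K + 1) * K)) := by
        rw [sq]
        gcongr <;> apply hK

lemma card_mem_mul_sum_le_card_mul {K : ℕ} (hK : ∀ i, D i ≤ K) (a v : Fin n) :
    #{E ∈ realizations D | s(a, v) ∈ E} * ∑ i, D i ≤
      #(realizations D) * K ^ 2 + #{E ∈ realizations D | s(a, v) ∈ E} * (K * (K + 2)) := by
  rw [← card_filter_add_card_filter_not (s := realizations D) (s(a, v) ∈ ·)]
  linarith [card_mem_mul_sum_le_card_notMem_mul hK a v]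

end DoubleCounting

/-- Switching bound on the edge probability (Lemma 2.3). -/
theorem edge_probability_switching_bound (n : ℕ) (D : Fin n → ℕ)
    (hgr : 0 < gcount n D)
    (hcond : ((Finset.univ.sup D : ℕ) : ℝ) * ((Finset.univ.sup D : ℕ) + 2) < (∑ i, (D i : ℝ)))
    (a v : Fin n) (hav : a ≠ v) :
    Pedge n D a v ≤
      ((Finset.univ.sup D : ℕ) : ℝ) ^ 2 /
        ((∑ i, (D i : ℝ)) *
          (1 - ((Finset.univ.sup D : ℕ) : ℝ) * ((Finset.univ.sup D : ℕ) + 2) /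
            (∑ i, (D i : ℝ)))) := by
  have hK : ∀ i, D i ≤ univ.sup D := fun i => le_sup (mem_univ i)
  generalize univ.sup D = K at hcond hK ⊢
  have count : (#{E ∈ realizations D | s(a, v) ∈ E} : ℝ) * ∑ i, (D i : ℝ) ≤
      #(realizations D) * (K : ℝ) ^ 2 +
        #{E ∈ realizations D | s(a, v) ∈ E} * ((K : ℝ) * (K + 2)) := by
    exact_mod_cast card_mem_mul_sum_le_card_mul hK a v
  have card_pos : (0 : ℝ) < #(realizations D) := Nat.cast_pos.2 hgr
  have sum_pos : 0 < ∑ i, (D i : ℝ) := lt_of_le_of_lt (by positivity) hcond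
  have denominator_eq : (∑ i, (D i : ℝ)) * (1 - (K : ℝ) * (K + 2) / ∑ i, (D i : ℝ)) =
      ∑ i, (D i : ℝ) - K * (K + 2) := by
    rw [mul_one_sub, mul_div_cancel₀ _ sum_pos.ne']
  rw [denominator_eq, Pedge_eq_card_div_card, div_le_div_iff₀ card_pos (sub_pos.2 hcond)]
  linarith
end
end

section
/- There exists n₀ such that for all n ≥ n₀ the following holds: if d_1,…,d_n are integers with Σ_i d_i even and 1 ≤ d_i ≤ 2√n − 2 for all i ∈ [n], then there exists a simple graph on n vertices with degrees d_1,…,d_n. -/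
open Finset

noncomputable section

/-! Among the graphs whose degrees are bounded by `D`, take one with the largest total degree. If it
misses `D`, parity leaves room for one more edge end at each of two (possibly equal) vertices `u`
and `w`, and after moving one defect we may assume that they have the same closed neighbourhood `C`.
No alternating walk may join the two defects, so the vertices outside `C` are saturated and pairwise
nonadjacent. Let `p` be the number of vertices of `C` with a neighbour outside `C`. Those with at
least two such neighbours are adjacent to all the others, so if `δ ≤ D ≤ Δ`, each of the `p`
vertices has at most `Δ - p` neighbours outside. Counting the edges that leave `C` gives
`δ (n - Δ) ≤ p (Δ - p) ≤ Δ² / 4`. -/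

open SimpleGraph (edge)

section UnitVectors

variable {ι : Type*} [DecidableEq ι]

lemma add_single_le_of_lt {f g : ι → ℕ} {i : ι} (hfg : f ≤ g) (hi : f i < g i) :
    f + Pi.single i 1 ≤ g := by
  intro j
  obtain rfl | hj := eq_or_ne j i
  · simpa using hi
  · simpa [hj] using hfg j

lemma exists_add_single_le_of_lt {f g : ι → ℕ} (hfg : f < g) : ∃ i, f + Pi.single i 1 ≤ g :=
  have ⟨hle, i, hi⟩ := Pi.lt_def.1 hfg
  ⟨i, add_single_le_of_lt hle hi⟩

end UnitVectors

variable {V : Type*} {G H : SimpleGraph V} {D : V → ℕ} {u w x x' y z : V}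

lemma disjoint_edge_edge (hx : x ≠ x') (hu : u ≠ x') : Disjoint (edge u x) (edge w x') := by
  rw [SimpleGraph.disjoint_edge, SimpleGraph.edge_adj]
  grind

variable [Fintype V]

open Classical in
/-- The degrees of `G` as a function on the vertices. The decidability instances are the classical
ones, so that the degrees of different graphs can be compared as functions. -/
def degreeVec (G : SimpleGraph V) (v : V) : ℕ :=
  G.degree v

lemma even_sum_degreeVec (G : SimpleGraph V) : Even (∑ v, degreeVec G v) := by
  classical
  exact even_iff_two_dvd.2 (Dvd.intro _ G.sum_degrees_eq_twice_card_edges.symm)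

lemma degreeVec_eq_card {s : Finset V} (hs : ∀ x, x ∈ s ↔ G.Adj u x) : degreeVec G u = #s := by
  classical
  rw [degreeVec, ← SimpleGraph.card_neighborFinset_eq_degree]
  congr
  ext x
  rw [SimpleGraph.mem_neighborFinset, hs]

lemma card_le_degreeVec {s : Finset V} (hs : ∀ x ∈ s, G.Adj u x) : #s ≤ degreeVec G u := by
  classical
  exact card_le_card fun x hx ↦ (G.mem_neighborFinset u x).2 (hs x hx)

lemma degreeVec_sup_of_disjoint (h : Disjoint G H) :
    degreeVec (G ⊔ H) = degreeVec G + degreeVec H := by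
  classical
  ext v
  simp only [degreeVec, Pi.add_apply, ← SimpleGraph.card_neighborFinset_eq_degree]
  rw [SimpleGraph.neighborFinset_sup,
    card_union_of_disjoint (G.disjoint_neighborFinset_of_disjoint H v h)]

lemma degreeVec_edge [DecidableEq V] (hne : u ≠ w) :
    degreeVec (edge u w) = Pi.single u 1 + Pi.single w 1 := by
  ext v
  obtain rfl | hvu := eq_or_ne v u
  · rw [degreeVec_eq_card (s := {w}) (by grind)]
    simp [hne]
  obtain rfl | hvw := eq_or_ne v w
  · rw [degreeVec_eq_card (s := {u}) (by grind)]
    simp [hvu]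
  · rw [degreeVec_eq_card (s := ∅) (by grind)]
    simp [hvu, hvw]

lemma degreeVec_exchange {R A : SimpleGraph V} (hR : R ≤ G) (hA : Disjoint G A) :
    degreeVec (G \ R ⊔ A) + degreeVec R = degreeVec G + degreeVec A := by
  have hG : degreeVec G = degreeVec (G \ R) + degreeVec R := by
    rw [← degreeVec_sup_of_disjoint disjoint_sdiff_self_left, sdiff_sup_cancel hR]
  rw [degreeVec_sup_of_disjoint (hA.mono_left sdiff_le), hG, add_right_comm]

lemma exists_degreeVec_eq_of_two_switch (hxy : G.Adj x y) (hx'z : G.Adj x' z) (hx : x ≠ x')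
    (hyz : y ≠ z) (hnx : ¬G.Adj x x') (hnyz : ¬G.Adj y z) :
    ∃ H, degreeVec H = degreeVec G ∧ H ≤ G ⊔ edge x x' ⊔ edge y z ∧ H.Adj x x' := by
  classical
  have hxz : x ≠ z := by rintro rfl; exact hnx hx'z.symm
  have hR : edge x y ⊔ edge x' z ≤ G := by
    simp only [sup_le_iff, SimpleGraph.edge_le_iff]
    exact ⟨.inr hxy, .inr hx'z⟩
  have hA : Disjoint G (edge x x' ⊔ edge y z) := by
    simp only [disjoint_sup_right, SimpleGraph.disjoint_edge]
    exact ⟨hnx, hnyz⟩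
  have hdeg := degreeVec_exchange hR hA
  rw [degreeVec_sup_of_disjoint (disjoint_edge_edge hyz hxz),
    degreeVec_sup_of_disjoint (disjoint_edge_edge hx'z.ne hxz),
    degreeVec_edge hxy.ne, degreeVec_edge hx'z.ne, degreeVec_edge hx, degreeVec_edge hyz] at hdeg
  refine ⟨G \ (edge x y ⊔ edge x' z) ⊔ (edge x x' ⊔ edge y z), ?_, ?_, ?_⟩
  · refine add_right_cancel (hdeg.trans ?_)
    abel
  · rw [sup_assoc]
    exact sup_le_sup_right sdiff_le _
  · simp [SimpleGraph.edge_adj, hx]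

/-- `G` is a graph of largest total degree among those whose degrees are bounded by `D`. -/
def IsMaxPartialRealization (D : V → ℕ) (G : SimpleGraph V) : Prop :=
  MaximalFor (fun H ↦ degreeVec H ≤ D) (fun H ↦ ∑ v, degreeVec H v) G

lemma exists_isMaxPartialRealization (D : V → ℕ) : ∃ G, IsMaxPartialRealization D G :=
  (Set.toFinite {G : SimpleGraph V | degreeVec G ≤ D}).exists_maximalFor _ _
    ⟨⊥, fun v ↦ by simp [degreeVec]⟩

lemma IsMaxPartialRealization.of_sum_eq (hG : IsMaxPartialRealization D G) (hH : degreeVec H ≤ D)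
    (hsum : ∑ v, degreeVec H v = ∑ v, degreeVec G v) : IsMaxPartialRealization D H :=
  ⟨hH, fun _ hK hle ↦ (hG.2 hK (hsum.ge.trans hle)).trans hsum.ge⟩

open Classical in
/-- The closed neighbourhood of `u` in `G`. -/
def closedNbhd (G : SimpleGraph V) (u : V) : Finset V :=
  {x | x = u ∨ G.Adj u x}

lemma mem_closedNbhd : x ∈ closedNbhd G u ↔ x = u ∨ G.Adj u x := by
  simp [closedNbhd]

lemma notMem_closedNbhd : x ∉ closedNbhd G u ↔ u ≠ x ∧ ¬G.Adj u x := by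
  rw [mem_closedNbhd, not_or, eq_comm]

lemma card_closedNbhd (G : SimpleGraph V) (u : V) : #(closedNbhd G u) = degreeVec G u + 1 := by
  classical
  have hmem : ∀ x, x ∈ (closedNbhd G u).erase u ↔ G.Adj u x := by
    grind [mem_closedNbhd, G.ne_of_adj]
  rw [degreeVec_eq_card hmem, card_erase_add_one (mem_closedNbhd.2 (.inl rfl))]

open Classical in
/-- The neighbours of `y` that lie outside the closed neighbourhood of `u`. -/
def outerNbrs (G : SimpleGraph V) (u y : V) : Finset V :=
  {x | G.Adj y x ∧ x ∉ closedNbhd G u}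

lemma mem_outerNbrs : x ∈ outerNbrs G u y ↔ G.Adj y x ∧ x ∉ closedNbhd G u := by
  simp [outerNbrs]

open Classical in
/-- The neighbours of `u` through which the closed neighbourhood of `u` is connected to the rest of
the graph. -/
def hubs (G : SimpleGraph V) (u : V) : Finset V :=
  {y | G.Adj u y ∧ (outerNbrs G u y).Nonempty}

lemma mem_hubs : y ∈ hubs G u ↔ G.Adj u y ∧ (outerNbrs G u y).Nonempty := by
  simp [hubs]

lemma card_hubs_le (G : SimpleGraph V) (u : V) : #(hubs G u) ≤ degreeVec G u :=
  card_le_degreeVec fun _ hy ↦ (mem_hubs.1 hy).1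

section Deficiency

variable [DecidableEq V]

/-- The degrees of `G` stay below `D` when the ends `u` and `w` of a further edge are counted. For
`u = w` this says that `u` misses at least two edges. -/
def DeficientAt (D : V → ℕ) (G : SimpleGraph V) (u w : V) : Prop :=
  degreeVec G + Pi.single u 1 + Pi.single w 1 ≤ D

lemma DeficientAt.symm (h : DeficientAt D G u w) : DeficientAt D G w u := by
  rwa [DeficientAt, add_right_comm]

lemma DeficientAt.add_single_le (h : DeficientAt D G u w) : degreeVec G + Pi.single u 1 ≤ D :=
  le_self_add.trans h

lemma DeficientAt.degreeVec_lt (h : DeficientAt D G u w) : degreeVec G u < D u := by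
  simpa using h.add_single_le u

namespace IsMaxPartialRealization

lemma degreeVec_ne (hG : IsMaxPartialRealization D G) (hdef : DeficientAt D G u w)
    (H : SimpleGraph V) : degreeVec H ≠ degreeVec G + Pi.single u 1 + Pi.single w 1 := by
  intro hH
  have hle := hG.2 (j := H) (hH.trans_le hdef)
  simp only [hH, Pi.add_apply, sum_add_distrib, sum_pi_single', mem_univ, if_true] at hle
  omega

lemma exists_deficientAt (hG : IsMaxPartialRealization D G) (hne : degreeVec G ≠ D)
    (heven : Even (∑ v, D v)) : ∃ u w, DeficientAt D G u w := by
  obtain ⟨u, hu⟩ := exists_add_single_le_of_lt (hG.1.lt_of_ne hne)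
  have hne' : degreeVec G + Pi.single u 1 ≠ D := by
    rintro rfl
    simp [sum_add_distrib, Nat.even_add_one, even_sum_degreeVec] at heven
  exact ⟨u, exists_add_single_le_of_lt (hu.lt_of_ne hne')⟩

lemma adj_of_deficientAt (hG : IsMaxPartialRealization D G) (hdef : DeficientAt D G u w)
    (hne : u ≠ w) : G.Adj u w := by
  by_contra hn
  apply hG.degreeVec_ne hdef (G ⊔ edge u w)
  rw [degreeVec_sup_of_disjoint (G.disjoint_edge.2 hn), degreeVec_edge hne, add_assoc]

lemma degreeVec_eq_of_not_adj (hG : IsMaxPartialRealization D G) (hdef : DeficientAt D G u w)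
    (hne : u ≠ x) (hn : ¬G.Adj u x) : degreeVec G x = D x := by
  by_contra hx
  have hlt : (degreeVec G + Pi.single u 1 : V → ℕ) x < D x := by
    simpa [hne.symm] using (hG.1 x).lt_of_ne hx
  exact hn (hG.adj_of_deficientAt (add_single_le_of_lt hdef.add_single_le hlt) hne)

lemma not_adj_of_not_adj_of_not_adj (hG : IsMaxPartialRealization D G)
    (hdef : DeficientAt D G u w) (hux : u ≠ x) (hwx' : w ≠ x') (hn : ¬G.Adj u x)
    (hn' : ¬G.Adj w x') : ¬G.Adj x x' := by
  intro hxx'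
  have hux' : u ≠ x' := by rintro rfl; exact hn hxx'.symm
  have hR : edge x x' ≤ G := G.edge_le_iff.2 (.inr hxx')
  have hA : Disjoint G (edge u x ⊔ edge w x') := by
    simp only [disjoint_sup_right, SimpleGraph.disjoint_edge]
    exact ⟨hn, hn'⟩
  have hdeg := degreeVec_exchange hR hA
  rw [degreeVec_sup_of_disjoint (disjoint_edge_edge hxx'.ne hux'), degreeVec_edge hxx'.ne,
    degreeVec_edge hux, degreeVec_edge hwx'] at hdeg
  apply hG.degreeVec_ne hdef (G \ edge x x' ⊔ (edge u x ⊔ edge w x'))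
  refine add_right_cancel (hdeg.trans ?_)
  abel

lemma exists_deficientAt_self (hG : IsMaxPartialRealization D G) (hdef : DeficientAt D G u w)
    (hux : u ≠ x) (hn : ¬G.Adj u x) (hwx : G.Adj w x) :
    ∃ H, IsMaxPartialRealization D H ∧ DeficientAt D H w w := by
  have hR : edge w x ≤ G := G.edge_le_iff.2 (.inr hwx)
  have hdeg := degreeVec_exchange hR (G.disjoint_edge.2 hn)
  rw [degreeVec_edge hwx.ne, degreeVec_edge hux, ← add_assoc, ← add_assoc] at hdeg
  replace hdeg := add_right_cancel hdeg
  have hdef' : DeficientAt D (G \ edge w x ⊔ edge u x) w w := by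
    rwa [DeficientAt, hdeg]
  refine ⟨_, hG.of_sum_eq ?_ ?_, hdef'⟩
  · exact le_self_add.trans hdef'.add_single_le
  · have hsum := congrArg (fun f ↦ ∑ v, f v) hdeg
    simpa [sum_add_distrib] using hsum

end IsMaxPartialRealization

/-- A partial realization of largest total degree which leaves room for an edge between two vertices
that cannot be told apart by their closed neighbourhoods. They may coincide. -/
structure IsTwinDefect (D : V → ℕ) (G : SimpleGraph V) (u w : V) : Prop where
  isMax : IsMaxPartialRealization D G
  deficientAt : DeficientAt D G u w
  closedNbhd_eq : closedNbhd G u = closedNbhd G w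

lemma IsMaxPartialRealization.exists_isTwinDefect (hG : IsMaxPartialRealization D G)
    (hdef : DeficientAt D G u w) : ∃ H u' w', IsTwinDefect D H u' w' := by
  have of_not_subset {u w : V} (hdef : DeficientAt D G u w)
      (hsub : ¬closedNbhd G w ⊆ closedNbhd G u) : ∃ H u' w', IsTwinDefect D H u' w' := by
    obtain ⟨x, hxw, hxu⟩ := not_subset.1 hsub
    obtain ⟨hux, hn⟩ := notMem_closedNbhd.1 hxu
    have hwx : G.Adj w x := by
      refine (mem_closedNbhd.1 hxw).resolve_left ?_
      rintro rfl
      exact hn (hG.adj_of_deficientAt hdef hux)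
    obtain ⟨H, hH, hdefH⟩ := hG.exists_deficientAt_self hdef hux hn hwx
    exact ⟨H, w, w, hH, hdefH, rfl⟩
  by_cases huw : closedNbhd G u ⊆ closedNbhd G w
  · by_cases hwu : closedNbhd G w ⊆ closedNbhd G u
    · exact ⟨G, u, w, hG, hdef, huw.antisymm hwu⟩
    · exact of_not_subset hdef hwu
  · exact of_not_subset hdef.symm huw

namespace IsTwinDefect

lemma not_adj_of_notMem (h : IsTwinDefect D G u w) (hx : x ∉ closedNbhd G u)
    (hx' : x' ∉ closedNbhd G u) : ¬G.Adj x x' := by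
  obtain ⟨hux, hn⟩ := notMem_closedNbhd.1 hx
  obtain ⟨hwx', hn'⟩ := notMem_closedNbhd.1 (h.closedNbhd_eq ▸ hx')
  exact h.isMax.not_adj_of_not_adj_of_not_adj h.deficientAt hux hwx' hn hn'

lemma degreeVec_eq_of_notMem (h : IsTwinDefect D G u w) (hx : x ∉ closedNbhd G u) :
    degreeVec G x = D x :=
  have ⟨hux, hn⟩ := notMem_closedNbhd.1 hx
  h.isMax.degreeVec_eq_of_not_adj h.deficientAt hux hn

lemma mem_hubs_of_adj (h : IsTwinDefect D G u w) (hx : x ∉ closedNbhd G u) (hxy : G.Adj x y) :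
    y ∈ hubs G u := by
  have hyC : y ∈ closedNbhd G u := by
    by_contra hyC
    exact h.not_adj_of_notMem hx hyC hxy
  have hyu : y ≠ u := by
    rintro rfl
    exact (notMem_closedNbhd.1 hx).2 hxy.symm
  exact mem_hubs.2 ⟨(mem_closedNbhd.1 hyC).resolve_left hyu, x, mem_outerNbrs.2 ⟨hxy.symm, hx⟩⟩

-- Otherwise a 2-switch makes `x` and `x'` adjacent without changing any degree, and the alternating
-- walk `u x x' w` then joins the two defects.
lemma adj_of_mem_outerNbrs (h : IsTwinDefect D G u w) (hyz : y ≠ z) (hx : x ∈ outerNbrs G u y)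
    (hx' : x' ∈ outerNbrs G u z) (hxx' : x ≠ x') : G.Adj y z := by
  obtain ⟨hyx, hxC⟩ := mem_outerNbrs.1 hx
  obtain ⟨hzx', hxC'⟩ := mem_outerNbrs.1 hx'
  by_contra hn
  have hnxx' : ¬G.Adj x x' := h.not_adj_of_notMem hxC hxC'
  have hxz : x ≠ z := by rintro rfl; exact hnxx' hzx'
  have hyx' : y ≠ x' := by rintro rfl; exact hnxx' hyx.symm
  obtain ⟨H, hdeg, hle, hadj⟩ :=
    exists_degreeVec_eq_of_two_switch hyx.symm hzx'.symm hxx' hyz hnxx' hn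
  have hH : IsMaxPartialRealization D H :=
    h.isMax.of_sum_eq (hdeg.trans_le h.isMax.1) (by rw [hdeg])
  have hdef : DeficientAt D H u w := by
    rw [DeficientAt, hdeg]
    exact h.deficientAt
  obtain ⟨hux, hnux⟩ := notMem_closedNbhd.1 hxC
  obtain ⟨hwx, -⟩ := notMem_closedNbhd.1 (h.closedNbhd_eq ▸ hxC)
  obtain ⟨hux', -⟩ := notMem_closedNbhd.1 hxC'
  obtain ⟨hwx', hnwx'⟩ := notMem_closedNbhd.1 (h.closedNbhd_eq ▸ hxC')
  have hnHux : ¬H.Adj u x := fun hHux ↦ by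
    have := hle hHux
    simp only [SimpleGraph.sup_adj, SimpleGraph.edge_adj] at this
    grind [hyx.ne]
  have hnHwx' : ¬H.Adj w x' := fun hHwx' ↦ by
    have := hle hHwx'
    simp only [SimpleGraph.sup_adj, SimpleGraph.edge_adj] at this
    grind [hzx'.ne]
  exact hH.not_adj_of_not_adj_of_not_adj hdef hux hwx' hnHux hnHwx' hadj

lemma card_outerNbrs_add_card_hubs_le (h : IsTwinDefect D G u w) (hy : y ∈ hubs G u) :
    #(outerNbrs G u y) + #(hubs G u) ≤ max (D u) (D y) := by
  obtain ⟨huy, -⟩ := mem_hubs.1 hy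
  rcases le_or_gt #(outerNbrs G u y) 1 with hfew | hmany
  · have := card_hubs_le G u
    have := h.deficientAt.degreeVec_lt
    omega
  have hadj : ∀ z ∈ (hubs G u).erase y, G.Adj y z := by
    intro z hz
    obtain ⟨hzy, hz⟩ := mem_erase.1 hz
    obtain ⟨-, x', hx'⟩ := mem_hubs.1 hz
    obtain ⟨x, hx, hxx'⟩ := exists_mem_ne hmany x'
    exact h.adj_of_mem_outerNbrs hzy.symm hx hx' hxx'
  have hu : u ∉ (hubs G u).erase y := fun hu ↦
    (mem_hubs.1 (mem_of_mem_erase hu)).1.ne rfl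
  have hdisj : Disjoint (outerNbrs G u y) (insert u ((hubs G u).erase y)) := by
    refine disjoint_left.2 fun z hz hz' ↦ (mem_outerNbrs.1 hz).2 (mem_closedNbhd.2 ?_)
    exact (mem_insert.1 hz').imp_right fun hz' ↦ (mem_hubs.1 (mem_of_mem_erase hz')).1
  have hsub : ∀ z ∈ outerNbrs G u y ∪ insert u ((hubs G u).erase y), G.Adj y z := by
    intro z hz
    obtain hz | hz := mem_union.1 hz
    · exact (mem_outerNbrs.1 hz).1
    obtain rfl | hz := mem_insert.1 hz
    · exact huy.symm
    · exact hadj z hz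
  calc #(outerNbrs G u y) + #(hubs G u)
      = #(outerNbrs G u y ∪ insert u ((hubs G u).erase y)) := by
        rw [card_union_of_disjoint hdisj, card_insert_of_notMem hu, card_erase_add_one hy]
    _ ≤ degreeVec G y := card_le_degreeVec hsub
    _ ≤ max (D u) (D y) := (h.isMax.1 y).trans (le_max_right _ _)

variable {δ Δ : ℕ}

lemma card_compl_mul_le (h : IsTwinDefect D G u w) (hδ : ∀ v, δ ≤ D v) (hΔ : ∀ v, D v ≤ Δ) :
    #(closedNbhd G u)ᶜ * δ ≤ #(hubs G u) * (Δ - #(hubs G u)) := by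
  classical
  refine card_mul_le_card_mul G.Adj (fun x hx ↦ ?_) (fun y hy ↦ ?_)
  · rw [mem_compl] at hx
    have habove : ∀ y, y ∈ (hubs G u).bipartiteAbove G.Adj x ↔ G.Adj x y := by
      simpa using fun y ↦ h.mem_hubs_of_adj hx
    rw [← degreeVec_eq_card habove, h.degreeVec_eq_of_notMem hx]
    exact hδ x
  · have hbelow : (closedNbhd G u)ᶜ.bipartiteBelow G.Adj y = outerNbrs G u y := by
      ext x
      simp [mem_outerNbrs, G.adj_comm, and_comm]
    have hcard := h.card_outerNbrs_add_card_hubs_le hy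
    have hmax : max (D u) (D y) ≤ Δ := max_le (hΔ u) (hΔ y)
    rw [hbelow]
    omega

lemma four_mul_card_le (h : IsTwinDefect D G u w) (hδ : ∀ v, δ ≤ D v) (hΔ : ∀ v, D v ≤ Δ) :
    4 * δ * Fintype.card V ≤ Δ ^ 2 + 4 * δ * Δ := by
  have hdeg : degreeVec G u < Δ := h.deficientAt.degreeVec_lt.trans_le (hΔ u)
  have hhubs : #(hubs G u) ≤ Δ := (card_hubs_le G u).trans hdeg.le
  have hclosed : #(closedNbhd G u) ≤ Δ := (card_closedNbhd G u).trans_le hdeg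
  calc 4 * δ * Fintype.card V
      = 4 * (#(closedNbhd G u)ᶜ * δ) + 4 * δ * #(closedNbhd G u) := by
        rw [← card_compl_add_card (closedNbhd G u)]
        ring
    _ ≤ 4 * (#(hubs G u) * (Δ - #(hubs G u))) + 4 * δ * Δ := by
        gcongr 4 * ?_ + 4 * δ * ?_
        exact h.card_compl_mul_le hδ hΔ
    _ ≤ (#(hubs G u) + (Δ - #(hubs G u))) ^ 2 + 4 * δ * Δ := by
        rw [← mul_assoc]
        gcongr
        exact four_mul_le_sq_add _ _
    _ = Δ ^ 2 + 4 * δ * Δ := by rw [Nat.add_sub_cancel' hhubs]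

end IsTwinDefect

end Deficiency

theorem exists_degreeVec_eq {δ : ℕ} (heven : Even (∑ v, D v)) (hδ : ∀ v, δ ≤ D v)
    (hD : ∀ v, D v ^ 2 + 4 * δ * D v < 4 * δ * Fintype.card V) :
    ∃ G : SimpleGraph V, degreeVec G = D := by
  classical
  obtain ⟨G, hG⟩ := exists_isMaxPartialRealization D
  refine ⟨G, ?_⟩
  by_contra hne
  obtain ⟨u, w, hdef⟩ := hG.exists_deficientAt hne heven
  obtain ⟨H, u', w', htwin⟩ := hG.exists_isTwinDefect hdef
  have : Nonempty V := ⟨u⟩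
  obtain ⟨m, hm⟩ := Finite.exists_max D
  exact (hD m).not_ge (htwin.four_mul_card_le hδ hm)

lemma deg_edgeFinset {n : ℕ} (G : SimpleGraph (Fin n)) [Fintype G.edgeSet] (i : Fin n) :
    deg G.edgeFinset i = degreeVec G i := by
  rw [deg, degreeVec, ← SimpleGraph.card_incidenceFinset_eq_degree,
    SimpleGraph.incidenceFinset_eq_filter]

lemma gcount_degreeVec_pos {n : ℕ} (G : SimpleGraph (Fin n)) : 0 < gcount n (degreeVec G) := by
  classical
  refine card_pos.2 ⟨G.edgeFinset, mem_filter.2 ⟨?_, deg_edgeFinset G⟩⟩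
  refine mem_filter.2 ⟨mem_univ _, fun e he ↦ G.not_isDiag_of_mem_edgeSet ?_⟩
  exact SimpleGraph.mem_edgeFinset.1 he

lemma sq_add_four_mul_lt_of_le_two_mul_sqrt_sub_two {d n : ℕ} (h : (d : ℝ) ≤ 2 * √n - 2) :
    d ^ 2 + 4 * d < 4 * n := by
  have hsq : ((d : ℝ) + 2) ^ 2 ≤ 4 * n := by
    calc ((d : ℝ) + 2) ^ 2 ≤ (2 * √(n : ℝ)) ^ 2 := by gcongr; linarith
      _ = 4 * (n : ℝ) := by rw [mul_pow, Real.sq_sqrt n.cast_nonneg]; norm_num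
  have hsq' : (d + 2) ^ 2 ≤ 4 * n := mod_cast hsq
  linarith

theorem small_degree_graphical_general (n : ℕ) (D : Fin n → ℕ) (heven : Even (∑ i, D i))
    (hD : ∀ i, 1 ≤ D i ∧ (D i : ℝ) ≤ 2 * √n - 2) : 0 < gcount n D := by
  obtain ⟨G, rfl⟩ := exists_degreeVec_eq heven (fun i ↦ (hD i).1) fun i ↦ by
    simpa using sq_add_four_mul_lt_of_le_two_mul_sqrt_sub_two (hD i).2
  exact gcount_degreeVec_pos G

/-- Sequences with entries between 1 and 2√n - 2 are graphical (Lemma 2.4(b)). -/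
theorem small_degree_graphical :
    ∃ n₀ : ℕ, ∀ n : ℕ, n₀ ≤ n →
      ∀ D : Fin n → ℕ, Even (∑ i, D i) →
        (∀ i, 1 ≤ D i ∧ (D i : ℝ) ≤ 2 * Real.sqrt n - 2) →
        0 < gcount n D :=
  ⟨0, fun n _ D ↦ small_degree_graphical_general n D⟩
end
end

section
/- Let n be an integer, A ⊆ C([n],2), d a sequence of nonnegative integers of length n, and a, b ∈ [n]. Suppose both d − e_a and d − e_b are A-realisable, and suppose B(b, a, d − e_a) ≠ 1. Then R_{ab}(d) = (d_a / d_b) · (1 − B(a, b, d − e_b)) / (1 − B(b, a, d − e_a)), where for distinct i, j ∈ [n] and a sequence d' with N(d') > 0, B(i, j, d') = (1/d_i) · ( Σ_{v ∈ A(i)\A(j)} P_{iv}(d') + Σ_{v ∈ A(i)∩A(j)} P_{ivj}(d') ). -/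
open Finset

noncomputable section

/-- `N(D)`: the number of graphs realising the (integer) degree sequence `D` over the set `A`
of allowable pairs. -/
def NA (n : ℕ) (A : Finset (Sym2 (Fin n))) (D : Fin n → ℤ) : ℕ :=
  ((Graphs n).filter (fun E => E ⊆ A ∧ ∀ i, (deg E i : ℤ) = D i)).card

/-- `N_F(D)`: the number of graphs realising `D` over `A` that contain all edges of `F`. -/
def NAE (n : ℕ) (A : Finset (Sym2 (Fin n))) (F : Finset (Sym2 (Fin n))) (D : Fin n → ℤ) : ℕ :=
  ((Graphs n).filter (fun E => E ⊆ A ∧ F ⊆ E ∧ ∀ i, (deg E i : ℤ) = D i)).card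

/-- `P_F(D) = N_F(D)/N(D)`: the probability that a uniformly random graph realising `D`
over `A` contains all edges of `F`. -/
def PA (n : ℕ) (A : Finset (Sym2 (Fin n))) (F : Finset (Sym2 (Fin n))) (D : Fin n → ℤ) : ℝ :=
  (NAE n A F D : ℝ) / (NA n A D : ℝ)

/-- The `a`-th standard unit vector. -/
def eV {n : ℕ} (a : Fin n) : Fin n → ℤ := fun i => if i = a then 1 else 0

/-- `A(v)`: the allowable neighbourhood of `v`. -/
def nbhd (n : ℕ) (A : Finset (Sym2 (Fin n))) (v : Fin n) : Finset (Fin n) :=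
  Finset.univ.filter (fun u => s(v, u) ∈ A)

/-- `R_{ab}(D) = N(D - e_a)/N(D - e_b)`. -/
def RA (n : ℕ) (A : Finset (Sym2 (Fin n))) (a b : Fin n) (D : Fin n → ℤ) : ℝ :=
  (NA n A (D - eV a) : ℝ) / (NA n A (D - eV b) : ℝ)

/-- `B(i, j, D)` from Proposition 3.1(b). -/
def Bfun (n : ℕ) (A : Finset (Sym2 (Fin n))) (i j : Fin n) (D : Fin n → ℤ) : ℝ :=
  (1 / (D i : ℝ)) *
    ((∑ v ∈ nbhd n A i \ nbhd n A j, PA n A {s(i, v)} D) +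
      ∑ v ∈ nbhd n A i ∩ nbhd n A j, PA n A {s(i, v), s(j, v)} D)

/-!
Counting pairs (graph, edge at `i`) shows that `N(D) D_i (1 - B(i, j, D))` is the number of pairs
`(G, v)` such that `v` is an allowable neighbour of both `i` and `j`, `iv` is an edge of `G`, and
`jv` is not. Replacing the edge `bv` by `av` is a bijection from such pairs for `(b, a, D - e_a)` to
such pairs for `(a, b, D - e_b)`. Equating the two counts and dividing gives the recursion.
-/

section ReplaceElem

variable {α : Type*} [DecidableEq α] {s : Finset α} {x y : α}

/-- The finset `s` with `x` removed and `y` added. On edge sets this is the switching that moves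
one edge of a graph. -/
def replaceElem (x y : α) (s : Finset α) : Finset α :=
  insert y (s.erase x)

lemma mem_replaceElem_right : y ∈ replaceElem x y s :=
  mem_insert_self _ _

lemma notMem_replaceElem_left (hxy : x ≠ y) : x ∉ replaceElem x y s := by
  simp [replaceElem, hxy]

lemma replaceElem_replaceElem (hx : x ∈ s) (hy : y ∉ s) :
    replaceElem y x (replaceElem x y s) = s := by
  have hy' : y ∉ s.erase x := fun h => hy (mem_of_mem_erase h)
  rw [replaceElem, replaceElem, erase_insert hy', insert_erase hx]

lemma sum_replaceElem_add {M : Type*} [AddCommMonoid M] (f : α → M) (hx : x ∈ s) (hy : y ∉ s) :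
    ∑ z ∈ replaceElem x y s, f z + f x = ∑ z ∈ s, f z + f y := by
  have hy' : y ∉ s.erase x := fun h => hy (mem_of_mem_erase h)
  rw [replaceElem, sum_insert hy', add_assoc, sum_erase_add _ _ hx, add_comm]

end ReplaceElem

section Realisations

variable {n : ℕ} {A E : Finset (Sym2 (Fin n))} {D : Fin n → ℤ} {a b i j v : Fin n}

/-- The set `G_A(D)` of graphs with all edges in `A` and degree sequence `D`. -/
def realisations (A : Finset (Sym2 (Fin n))) (D : Fin n → ℤ) : Finset (Finset (Sym2 (Fin n))) :=
  {E ∈ Graphs n | E ⊆ A ∧ ∀ i, (deg E i : ℤ) = D i}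

/-- The graphs in `G_A(D)` that contain `iv` but not `jv`, that is, those in which the edge `iv`
can be switched to `jv`. -/
def switchable (A : Finset (Sym2 (Fin n))) (D : Fin n → ℤ) (i j v : Fin n) :
    Finset (Finset (Sym2 (Fin n))) :=
  {E ∈ realisations A D | s(i, v) ∈ E ∧ s(j, v) ∉ E}

lemma card_realisations : #(realisations A D) = NA n A D := rfl

lemma mem_realisations :
    E ∈ realisations A D ↔ (∀ e ∈ E, ¬ e.IsDiag) ∧ E ⊆ A ∧ ∀ i, (deg E i : ℤ) = D i := by
  simp only [realisations, Graphs, mem_filter, mem_univ, true_and]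

lemma mem_switchable :
    E ∈ switchable A D i j v ↔ E ∈ realisations A D ∧ s(i, v) ∈ E ∧ s(j, v) ∉ E :=
  mem_filter

lemma mem_nbhd : v ∈ nbhd n A i ↔ s(i, v) ∈ A := by
  simp only [nbhd, mem_filter, mem_univ, true_and]

lemma NAE_eq_card_filter (A F : Finset (Sym2 (Fin n))) (D : Fin n → ℤ) :
    NAE n A F D = #{E ∈ realisations A D | F ⊆ E} := by
  rw [NAE, realisations, filter_filter]
  simp only [and_comm, and_left_comm]

lemma nonneg_of_NA_pos (hN : 0 < NA n A D) (i : Fin n) : 0 ≤ D i := by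
  obtain ⟨E, hE⟩ := card_pos.1 hN
  have hdeg : (deg E i : ℤ) = D i := (mem_realisations.1 hE).2.2 i
  lia

lemma pos_of_NA_sub_eV_pos (hN : 0 < NA n A (D - eV a)) : 0 < D a := by
  have hnonneg := nonneg_of_NA_pos hN a
  simp only [Pi.sub_apply, eV, if_true] at hnonneg
  lia

lemma sub_eV_apply_of_ne (D : Fin n → ℤ) (h : i ≠ a) : (D - eV a) i = D i := by
  simp [eV, h]

lemma deg_eq_card_filter_nbhd (hE : E ⊆ A) (i : Fin n) :
    deg E i = #{v ∈ nbhd n A i | s(i, v) ∈ E} := by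
  refine (card_nbij (fun v => s(i, v)) ?_ ?_ ?_).symm
  · intro v hv
    exact mem_coe.2 (mem_filter.2 ⟨(mem_filter.1 hv).2, Sym2.mem_mk_left i v⟩)
  · exact fun v _ w _ h => Sym2.congr_right.1 h
  · intro e he
    obtain ⟨he, w, rfl⟩ := mem_filter.1 (mem_coe.1 he)
    exact ⟨w, mem_coe.2 (mem_filter.2 ⟨mem_nbhd.2 (hE he), he⟩), rfl⟩

lemma sum_NAE_singleton (A : Finset (Sym2 (Fin n))) (D : Fin n → ℤ) (i : Fin n) :
    ∑ v ∈ nbhd n A i, (NAE n A {s(i, v)} D : ℤ) = NA n A D * D i := by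
  have card_above (v : Fin n) : NAE n A {s(i, v)} D =
      #((realisations A D).bipartiteAbove (fun v E => s(i, v) ∈ E) v) := by
    simp only [NAE_eq_card_filter, singleton_subset_iff, bipartiteAbove]
  have card_below : ∀ E ∈ realisations A D,
      (#((nbhd n A i).bipartiteBelow (fun v E => s(i, v) ∈ E) E) : ℤ) = D i := by
    intro E hE
    obtain ⟨-, hEA, hdeg⟩ := mem_realisations.1 hE
    rw [← hdeg i, deg_eq_card_filter_nbhd hEA, bipartiteBelow]
  simp only [card_above]
  rw [← Nat.cast_sum, sum_card_bipartiteAbove_eq_sum_card_bipartiteBelow, Nat.cast_sum,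
    sum_congr rfl card_below, sum_const, card_realisations, nsmul_eq_mul]

lemma NAE_singleton_eq_add_card_switchable (A : Finset (Sym2 (Fin n))) (D : Fin n → ℤ)
    (i j v : Fin n) :
    NAE n A {s(i, v)} D = NAE n A {s(i, v), s(j, v)} D + #(switchable A D i j v) := by
  rw [NAE_eq_card_filter, NAE_eq_card_filter, switchable,
    ← card_filter_add_card_filter_not (fun E => s(j, v) ∈ E), filter_filter, filter_filter]
  simp only [insert_subset_iff, singleton_subset_iff]

lemma NA_mul_eq_sum_add_sum_card_switchable (A : Finset (Sym2 (Fin n))) (D : Fin n → ℤ)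
    (i j : Fin n) :
    NA n A D * D i =
      (∑ v ∈ nbhd n A i \ nbhd n A j, (NAE n A {s(i, v)} D : ℤ) +
        ∑ v ∈ nbhd n A i ∩ nbhd n A j, (NAE n A {s(i, v), s(j, v)} D : ℤ)) +
      ∑ v ∈ nbhd n A i ∩ nbhd n A j, (#(switchable A D i j v) : ℤ) := by
  rw [← sum_NAE_singleton, ← sum_inter_add_sum_sdiff (nbhd n A i) (nbhd n A j), add_assoc,
    ← sum_add_distrib, add_comm]
  simp only [NAE_singleton_eq_add_card_switchable A D i j, Nat.cast_add]

lemma NA_mul_one_sub_Bfun (hN : NA n A D ≠ 0) (hi : D i ≠ 0) (j : Fin n) :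
    (NA n A D : ℝ) * D i * (1 - Bfun n A i j D) =
      ∑ v ∈ nbhd n A i ∩ nbhd n A j, (#(switchable A D i j v) : ℝ) := by
  have hN' : (NA n A D : ℝ) ≠ 0 := mod_cast hN
  have hi' : (D i : ℝ) ≠ 0 := mod_cast hi
  have hcount := congrArg (Int.cast : ℤ → ℝ) (NA_mul_eq_sum_add_sum_card_switchable A D i j)
  push_cast at hcount
  simp only [Bfun, PA, ← sum_div]
  field_simp
  linarith

lemma ite_mem_mk_eq_eV_add_eV (h : a ≠ v) (i : Fin n) :
    (if i ∈ s(a, v) then 1 else 0 : ℤ) = eV a i + eV v i := by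
  simp only [Sym2.mem_iff, eV]
  grind

lemma deg_replaceElem (hav : a ≠ v) (hbv : b ≠ v) (hb : s(b, v) ∈ E) (ha : s(a, v) ∉ E)
    (i : Fin n) :
    (deg (replaceElem s(b, v) s(a, v) E) i : ℤ) = deg E i + eV a i - eV b i := by
  have hsum := sum_replaceElem_add (fun e => if i ∈ e then (1 : ℤ) else 0) hb ha
  simp only [ite_mem_mk_eq_eV_add_eV hav, ite_mem_mk_eq_eV_add_eV hbv] at hsum
  simp only [deg, card_filter, Nat.cast_sum, Nat.cast_ite, Nat.cast_one, Nat.cast_zero]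
  linarith

lemma replaceElem_mem_switchable (hav : s(a, v) ∈ A) (hne : a ≠ v)
    (hE : E ∈ switchable A (D - eV a) b a v) :
    replaceElem s(b, v) s(a, v) E ∈ switchable A (D - eV b) a b v := by
  obtain ⟨hE, hb, ha⟩ := mem_switchable.1 hE
  obtain ⟨hloopless, hEA, hdeg⟩ := mem_realisations.1 hE
  have hbv : b ≠ v := fun h => hloopless _ hb (Sym2.mk_isDiag_iff.2 h)
  refine mem_switchable.2 ⟨mem_realisations.2 ⟨?_, ?_, fun i => ?_⟩, mem_replaceElem_right,
    notMem_replaceElem_left (ne_of_mem_of_not_mem hb ha)⟩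
  · exact (forall_mem_insert _ _ _).2
      ⟨fun h => hne (Sym2.mk_isDiag_iff.1 h), fun e he => hloopless e (mem_of_mem_erase he)⟩
  · exact insert_subset hav ((erase_subset _ _).trans hEA)
  · rw [deg_replaceElem hne hbv hb ha, hdeg i]
    simp only [Pi.sub_apply]
    ring

lemma card_switchable_sub_eV_comm (hav : s(a, v) ∈ A) (hbv : s(b, v) ∈ A) (ha : a ≠ v)
    (hb : b ≠ v) :
    #(switchable A (D - eV a) b a v) = #(switchable A (D - eV b) a b v) :=
  card_nbij' (replaceElem s(b, v) s(a, v)) (replaceElem s(a, v) s(b, v))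
    (fun _ hE => replaceElem_mem_switchable hav ha hE)
    (fun _ hE => replaceElem_mem_switchable hbv hb hE)
    (fun _ hE => (mem_switchable.1 hE).2.elim replaceElem_replaceElem)
    (fun _ hE => (mem_switchable.1 hE).2.elim replaceElem_replaceElem)

lemma sum_card_switchable_sub_eV_comm (hA : ∀ e ∈ A, ¬ e.IsDiag) (D : Fin n → ℤ)
    (a b : Fin n) :
    ∑ v ∈ nbhd n A b ∩ nbhd n A a, #(switchable A (D - eV a) b a v) =
      ∑ v ∈ nbhd n A a ∩ nbhd n A b, #(switchable A (D - eV b) a b v) := by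
  rw [inter_comm]
  refine sum_congr rfl fun v hv => ?_
  have ne_of_mem {c : Fin n} (hc : s(c, v) ∈ A) : c ≠ v :=
    fun h => hA _ hc (Sym2.mk_isDiag_iff.2 h)
  rw [mem_inter, mem_nbhd, mem_nbhd] at hv
  exact card_switchable_sub_eV_comm hv.1 hv.2 (ne_of_mem hv.1) (ne_of_mem hv.2)

lemma NA_sub_eV_mul_one_sub_Bfun_comm (hA : ∀ e ∈ A, ¬ e.IsDiag) (hab : a ≠ b)
    (ha : 0 < NA n A (D - eV a)) (hb : 0 < NA n A (D - eV b)) :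
    (NA n A (D - eV a) : ℝ) * D b * (1 - Bfun n A b a (D - eV a)) =
      NA n A (D - eV b) * D a * (1 - Bfun n A a b (D - eV b)) := by
  have hDb : (D - eV a) b = D b := sub_eV_apply_of_ne D hab.symm
  have hDa : (D - eV b) a = D a := sub_eV_apply_of_ne D hab
  have count_b := NA_mul_one_sub_Bfun ha.ne' (hDb ▸ (pos_of_NA_sub_eV_pos hb).ne') a
  have count_a := NA_mul_one_sub_Bfun hb.ne' (hDa ▸ (pos_of_NA_sub_eV_pos ha).ne') b
  rw [hDb] at count_b
  rw [hDa] at count_a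
  rw [count_b, count_a]
  exact_mod_cast sum_card_switchable_sub_eV_comm hA D a b

end Realisations

/-- Recursive formula for the ratio `R_{ab}` (Proposition 3.1(b)). -/
theorem ratio_recursion (n : ℕ) (A : Finset (Sym2 (Fin n)))
    (hA : ∀ e ∈ A, ¬ e.IsDiag) (D : Fin n → ℤ) (hD : ∀ i, 0 ≤ D i)
    (a b : Fin n)
    (ha : 0 < NA n A (D - eV a)) (hb : 0 < NA n A (D - eV b))
    (hB : Bfun n A b a (D - eV a) ≠ 1) :
    RA n A a b D =
      ((D a : ℝ) / (D b : ℝ)) *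
        ((1 - Bfun n A a b (D - eV b)) / (1 - Bfun n A b a (D - eV a))) := by
  have hNb : (NA n A (D - eV b) : ℝ) ≠ 0 := mod_cast hb.ne'
  have hDb : (D b : ℝ) ≠ 0 := mod_cast (pos_of_NA_sub_eV_pos hb).ne'
  have hB' : 1 - Bfun n A b a (D - eV a) ≠ 0 := sub_ne_zero.2 hB.symm
  rcases eq_or_ne a b with rfl | hab
  · rw [RA, div_self hNb, div_self hDb, div_self hB', one_mul]
  · rw [RA, div_mul_div_comm, div_eq_div_iff hNb (mul_ne_zero hDb hB')]
    linarith [NA_sub_eV_mul_one_sub_Bfun_comm hA hab ha hb]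
end
end
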